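/- Assume ‖x_t‖² ≤ X² for all t, for some X > 0. Then for every t ≥ 1, every eigenvalue of D_t is at most max{ (3X² + √(X⁴ + 4X²c))/2, b + X² }; equivalently, D_t ⪯ max{ (3X² + √(X⁴ + 4X²c))/2, b + X² }·I in the positive semidefinite (Loewner) order. -/

import Mathlib

open Matrix

/-- `D₁ = b I + x₁ x₁ᵀ`, `D_t = (D_{t-1}⁻¹ + c⁻¹ I)⁻¹ + x_t x_tᵀ` for `t ≥ 2`
(the value at `0` is irrelevant). -/
noncomputable def Dmat (d : ℕ) (b c : ℝ) (x : ℕ → Fin d → ℝ) :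
    ℕ → Matrix (Fin d) (Fin d) ℝ
  | 0 => 1
  | 1 => b • (1 : Matrix (Fin d) (Fin d) ℝ) + vecMulVec (x 1) (x 1)
  | (t + 2) => ((Dmat d b c x (t + 1))⁻¹ + c⁻¹ • 1)⁻¹ + vecMulVec (x (t + 2)) (x (t + 2))



lemma aux_cs {d : ℕ} (y : Fin d → ℝ) (r : ℝ) (h : y ⬝ᵥ y ≤ r) :
    (r • (1 : Matrix (Fin d) (Fin d) ℝ) - vecMulVec y y).PosSemidef := by
  refine PosSemidef.of_dotProduct_mulVec_nonneg ?_ ?_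
  · ext i j
    simp [vecMulVec_apply, Matrix.one_apply, eq_comm, mul_comm]
  · intro v
    have h1 : (y ⬝ᵥ v) ^ 2 ≤ (y ⬝ᵥ y) * (v ⬝ᵥ v) := by
      simp only [dotProduct, ← sq]
      exact Finset.sum_mul_sq_le_sq_mul_sq _ _ _
    have h2 : 0 ≤ v ⬝ᵥ v := by
      simp only [dotProduct]
      exact Finset.sum_nonneg fun i _ => mul_self_nonneg _
    have h3 := mul_le_mul_of_nonneg_right h h2
    have h4 : star v ⬝ᵥ ((r • (1 : Matrix (Fin d) (Fin d) ℝ) - vecMulVec y y) *ᵥ v)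
        = r * (v ⬝ᵥ v) - (y ⬝ᵥ v) ^ 2 := by
      rw [Matrix.sub_mulVec, Matrix.smul_mulVec, Matrix.one_mulVec, vecMulVec_mulVec]
      simp [dotProduct_sub, dotProduct_smul, sq, dotProduct_comm v y]
    rw [h4]
    linarith

lemma aux_inv1 {d : ℕ} (D : Matrix (Fin d) (Fin d) ℝ) (hD : D.PosDef) (M : ℝ) (hM : 0 < M)
    (h : (M • (1 : Matrix (Fin d) (Fin d) ℝ) - D).PosSemidef) :
    (D⁻¹ - M⁻¹ • (1 : Matrix (Fin d) (Fin d) ℝ)).PosSemidef := by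
  have hu : IsUnit D.det := (Matrix.isUnit_iff_isUnit_det D).1 hD.isUnit
  have h1 := hD.inv.posSemidef.conjTranspose_mul_mul_same (M • (1 : Matrix (Fin d) (Fin d) ℝ) - D)
  rw [h.isHermitian.eq] at h1
  have h2 := (h1.add h).smul (by positivity : 0 ≤ M⁻¹ * M⁻¹)
  have e0 : D⁻¹ - M⁻¹ • (1 : Matrix (Fin d) (Fin d) ℝ) = (M⁻¹ * M⁻¹) •
      ((M • (1 : Matrix (Fin d) (Fin d) ℝ) - D) * D⁻¹ * (M • (1 : Matrix (Fin d) (Fin d) ℝ) - D)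
        + (M • (1 : Matrix (Fin d) (Fin d) ℝ) - D)) := by
   simp only [sub_mul, mul_sub, smul_mul_assoc, mul_smul_comm, one_mul, mul_one,
    Matrix.mul_nonsing_inv D hu, Matrix.nonsing_inv_mul D hu, smul_sub, smul_add, smul_smul]
   have e1 : M⁻¹ * M⁻¹ * (M * M) = 1 := by field_simp
   have e2 : M⁻¹ * M⁻¹ * M = M⁻¹ := by field_simp
   simp only [e1, e2, one_smul]
   abel
  rw [e0]
  exact h2

lemma aux_inv2 {d : ℕ} (A : Matrix (Fin d) (Fin d) ℝ) (hA : A.PosDef) (k : ℝ) (hk : 0 < k)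
    (h : (A - k • (1 : Matrix (Fin d) (Fin d) ℝ)).PosSemidef) :
    (k⁻¹ • (1 : Matrix (Fin d) (Fin d) ℝ) - A⁻¹).PosSemidef := by
  have hu : IsUnit A.det := (Matrix.isUnit_iff_isUnit_det A).1 hA.isUnit
  have h0 : ((A - k • (1 : Matrix (Fin d) (Fin d) ℝ))ᴴ *
      (A - k • (1 : Matrix (Fin d) (Fin d) ℝ))).PosSemidef :=
    Matrix.posSemidef_conjTranspose_mul_self _
  rw [h.isHermitian.eq] at h0
  have h1 := ((h0.smul (inv_nonneg.2 hk.le)).add h).conjTranspose_mul_mul_same A⁻¹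
  rw [hA.inv.isHermitian.eq] at h1
  convert h1 using 1
  have e : A⁻¹ * A = 1 := Matrix.nonsing_inv_mul A hu
  have e' : A * A⁻¹ = 1 := Matrix.mul_nonsing_inv A hu
  have e3 : k⁻¹ • ((A - k • (1 : Matrix (Fin d) (Fin d) ℝ)) *
      (A - k • (1 : Matrix (Fin d) (Fin d) ℝ))) + (A - k • (1 : Matrix (Fin d) (Fin d) ℝ))
      = A * (k⁻¹ • (1 : Matrix (Fin d) (Fin d) ℝ) - A⁻¹) * A := by
    simp only [sub_mul, mul_sub, smul_mul_assoc, mul_smul_comm, one_mul, mul_one, e', smul_sub,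
      smul_smul, inv_mul_cancel₀ hk.ne', inv_mul_cancel_left₀ hk.ne', one_smul]
    abel
  rw [e3, mul_assoc A, ← mul_assoc A⁻¹, e, one_mul, mul_assoc, e', mul_one]

lemma aux_vv {d : ℕ} (y : Fin d → ℝ) : (vecMulVec y y).PosSemidef := by
  simpa using Matrix.posSemidef_vecMulVec_self_star y

lemma aux_main (d : ℕ) (b c : ℝ)
    (hb : 0 < b) (hc : 0 < c) (x : ℕ → Fin d → ℝ)
    (Y M : ℝ) (hx : ∀ t : ℕ, x (t + 1) ⬝ᵥ x (t + 1) ≤ Y) (hM : 0 < M)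
    (h1 : b + Y ≤ M) (h2 : (M⁻¹ + c⁻¹)⁻¹ + Y ≤ M) (t : ℕ) :
    (Dmat d b c x (t + 1)).PosDef ∧
      (M • (1 : Matrix (Fin d) (Fin d) ℝ) - Dmat d b c x (t + 1)).PosSemidef := by
  induction t with
  | zero =>
    simp only [zero_add, Dmat]
    refine ⟨(PosDef.one.smul hb).add_posSemidef (aux_vv _), ?_⟩
    have := (aux_cs (x 1) Y (hx 0)).add
      ((PosSemidef.one (n := Fin d) (R := ℝ)).smul (sub_nonneg.2 h1))
    convert this using 1
    module
  | succ t ih =>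
    obtain ⟨hD, hle⟩ := ih
    simp only [Dmat]
    have hA : ((Dmat d b c x (t + 1))⁻¹ + c⁻¹ • (1 : Matrix (Fin d) (Fin d) ℝ)).PosDef :=
      hD.inv.add (PosDef.one.smul (inv_pos.2 hc))
    refine ⟨hA.inv.add_posSemidef (aux_vv _), ?_⟩
    have g1 := aux_inv1 _ hD M hM hle
    have g2 := aux_inv2 _ hA (M⁻¹ + c⁻¹) (by positivity) (by convert g1 using 1; module)
    have := ((aux_cs (x (t + 2)) Y (hx (t + 1))).add g2).add
      ((PosSemidef.one (n := Fin d) (R := ℝ)).smul (sub_nonneg.2 h2))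
    convert this using 1
    module

theorem laser_eigenvalue_bound (d : ℕ) (hd : 1 ≤ d) (b c : ℝ)
    (hb : 0 < b) (hbc : b < c) (x : ℕ → Fin d → ℝ)
    (X : ℝ) (hX : 0 < X) (hx : ∀ t : ℕ, x (t + 1) ⬝ᵥ x (t + 1) ≤ X ^ 2) :
    ∀ t : ℕ, 1 ≤ t →
      (max ((3 * X ^ 2 + Real.sqrt (X ^ 4 + 4 * X ^ 2 * c)) / 2) (b + X ^ 2) •
          (1 : Matrix (Fin d) (Fin d) ℝ) - Dmat d b c x t).PosSemidef := by
  intro t ht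
  obtain ⟨t, rfl⟩ : ∃ s, t = s + 1 := ⟨t - 1, by omega⟩
  have hc : 0 < c := hb.trans hbc
  set S := Real.sqrt (X ^ 4 + 4 * X ^ 2 * c) with hS
  have hS0 : 0 ≤ S := Real.sqrt_nonneg _
  have hS2 : S ^ 2 = X ^ 4 + 4 * X ^ 2 * c := Real.sq_sqrt (by positivity)
  set M := max ((3 * X ^ 2 + S) / 2) (b + X ^ 2) with hMd
  have hM1 : (3 * X ^ 2 + S) / 2 ≤ M := le_max_left _ _
  have hM2 : b + X ^ 2 ≤ M := le_max_right _ _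
  have hX2 : 0 < X ^ 2 := by positivity
  have hM : 0 < M := by linarith
  refine (aux_main d b c hb hc x (X ^ 2) M hx hM hM2 ?_ t).2
  have e : (M⁻¹ + c⁻¹)⁻¹ = M * c / (M + c) := by
    field_simp
    try ring
  rw [e, ← le_sub_iff_add_le, div_le_iff₀ (by positivity)]
  have h3 : S ≤ 2 * M - X ^ 2 := by linarith
  have h4 := pow_le_pow_left₀ hS0 h3 2
  nlinarith
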